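/- Let A be an aperiodic N×N 0–1 matrix, Σ_A^+ the associated one-sided subshift of finite type with shift σ and metric d_θ, m a σ-invariant Markov measure on Σ_A^+, and F(x,z) = (σ(x), G(x,z)) a skew product on Σ_A^+ × K satisfying (G1). Assume the Perron–Frobenius operator P_σ of σ with respect to m has spectral gap on the space of d_θ-Lipschitz functions. Then F admits exactly one invariant probability measure μ₀ belonging to S^∞; moreover ‖μ₀‖_∞ = 1 and ‖μ₀‖_{S^∞} = 2. -/

import Mathlib

open MeasureTheory ENNReal Set

namespace RDS

/-- The one-sided subshift of finite type `Σ_A^+` determined by the 0-1 matrix `A`. -/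
abbrev SigmaA (N : ℕ) (A : Fin N → Fin N → Bool) :=
  {x : ℕ → Fin N // ∀ i, A (x i) (x (i + 1)) = true}

variable {N : ℕ} {A : Fin N → Fin N → Bool}

/-- The shift map `σ` on `Σ_A^+`. -/
def shift (x : SigmaA N A) : SigmaA N A :=
  ⟨fun i => x.val (i + 1), fun i => x.prop (i + 1)⟩

/-- Aperiodicity of a 0-1 matrix: some power has all entries positive. -/
def Aperiodic (A : Fin N → Fin N → Bool) : Prop :=
  ∃ k : ℕ, 0 < k ∧ ∀ i j,
    0 < ((Matrix.of fun a b => if A a b then (1 : ℕ) else 0) ^ k) i j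

/-- The metric `d_θ(x,y) = Σ_i θ^i (1 - δ(x_i, y_i))` on `Σ_A^+`. -/
noncomputable def dTheta (θ : ℝ) (x y : SigmaA N A) : ℝ :=
  ∑' i : ℕ, θ ^ i * (if x.val i = y.val i then (0 : ℝ) else 1)

/-- Cylinder sets of `Σ_A^+`. -/
def cylinder (n : ℕ) (w : Fin (n + 1) → Fin N) : Set (SigmaA N A) :=
  {x | ∀ i : Fin (n + 1), x.val i = w i}

/-- `m` is a Markov measure on `Σ_A^+` compatible with `A`: it is given on
cylinders by a stochastic matrix `P` (vanishing where `A` vanishes) and a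
stationary probability vector `p`. -/
def IsMarkov (m : Measure (SigmaA N A)) : Prop :=
  ∃ (p : Fin N → ℝ≥0∞) (P : Fin N → Fin N → ℝ≥0∞),
    (∑ i, p i = 1) ∧ (∀ i, ∑ j, P i j = 1) ∧ (∀ j, ∑ i, p i * P i j = p j) ∧
    (∀ i j, A i j = false → P i j = 0) ∧
    ∀ (n : ℕ) (w : Fin (n + 1) → Fin N),
      m (cylinder n w) = p (w 0) * ∏ i : Fin n, P (w i.castSucc) (w i.succ)

/-- `σ_i⁻¹(γ)`: the sequence `γ` with the symbol `i` prepended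
(defined when `A i γ₀ = 1`), i.e. the inverse branch of the restriction `σ_i`
of `σ` to the cylinder `[i]`. -/
def prepend (i : Fin N) (x : SigmaA N A) (h : A i (x.val 0) = true) : SigmaA N A :=
  ⟨fun n => match n with
    | 0 => i
    | Nat.succ k => x.val k,
   fun j => match j with
    | 0 => h
    | Nat.succ k => x.prop k⟩

/-- `f` is `L`-Lipschitz with respect to the distance function `d`. -/
def LipWithD {X : Type*} (d : X → X → ℝ) (L : ℝ) (f : X → ℝ) : Prop :=
  ∀ x y, |f x - f y| ≤ L * d x y

/-- `f` is Lipschitz with respect to the distance function `d`. -/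
def LipD {X : Type*} (d : X → X → ℝ) (f : X → ℝ) : Prop :=
  ∃ L : ℝ, LipWithD d L f

/-- The best Lipschitz constant of `f` with respect to `d` (valued in `ℝ≥0∞`). -/
noncomputable def lipConst {X : Type*} (d : X → X → ℝ) (f : X → ℝ) : ℝ≥0∞ :=
  ⨆ (x : X) (y : X), ENNReal.ofReal (|f x - f y| / d x y)

/-- The sup norm of `f` (valued in `ℝ≥0∞`). -/
noncomputable def supNormE {X : Type*} (f : X → ℝ) : ℝ≥0∞ :=
  ⨆ x : X, ENNReal.ofReal |f x|

/-- The norm `‖f‖_θ = ‖f‖_∞ + Lip_d(f)`. -/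
noncomputable def thetaNorm {X : Type*} (d : X → X → ℝ) (f : X → ℝ) : ℝ≥0∞ :=
  supNormE f + lipConst d f

/-- The Perron-Frobenius operator duality characterizing `P_σ`:
`∫ P_σ(φ) · ψ dm = ∫ φ · (ψ ∘ σ) dm` for integrable `φ` and bounded measurable `ψ`. -/
def IsPerronFrobenius (m : Measure (SigmaA N A))
    (Pσ : (SigmaA N A → ℝ) → SigmaA N A → ℝ) : Prop :=
  ∀ φ ψ : SigmaA N A → ℝ, Integrable φ m → Measurable ψ → (∃ C, ∀ x, |ψ x| ≤ C) →
    ∫ x, Pσ φ x * ψ x ∂m = ∫ x, φ x * ψ (shift x) ∂m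

/-- Spectral gap for `P_σ` on `d_θ`-Lipschitz functions with constants `D`, `r`:
`‖P_σ^n φ‖_θ ≤ D r^n ‖φ‖_θ` for all `n` and all `d_θ`-Lipschitz `φ` with
`∫ φ dm = 0`. -/
def HasGap (m : Measure (SigmaA N A)) (θ : ℝ)
    (Pσ : (SigmaA N A → ℝ) → SigmaA N A → ℝ) (D r : ℝ) : Prop :=
  ∀ φ : SigmaA N A → ℝ, LipD (dTheta θ) φ → (∫ x, φ x ∂m) = 0 →
    ∀ n : ℕ, thetaNorm (dTheta θ) (Pσ^[n] φ) ≤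
      ENNReal.ofReal (D * r ^ n) * thetaNorm (dTheta θ) φ

/-- `Jm i` is the Jacobian `J_{m,σ_i}` of `m` with respect to the branch `σ_i`
(the restriction of `σ` to the cylinder `[i]`): `m (σ_i(E)) = ∫_E J_{m,σ_i} dm`
for every measurable `E` (intersected with `[i]`). -/
def IsJacobian (m : Measure (SigmaA N A)) (Jm : Fin N → SigmaA N A → ℝ) : Prop :=
  ∀ (i : Fin N) (E : Set (SigmaA N A)), MeasurableSet E →
    m {γ : SigmaA N A | ∃ h : A i (γ.val 0) = true, prepend i γ h ∈ E} =
      ∫⁻ x in E ∩ {x : SigmaA N A | x.val 0 = i}, ENNReal.ofReal (Jm i x) ∂m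

variable {K : Type*} [MetricSpace K] [MeasurableSpace K]

/-- The Wasserstein-Kantorovich like distance `W(ν₁,ν₂)`: the supremum of
`|∫ g dν₁ - ∫ g dν₂|` over `g : K → ℝ` with `Lip(g) ≤ 1` and `‖g‖_∞ ≤ 1`.
Applied with `ν₂ = 0` it gives the norm `‖ν₁‖_W`; applied to the two parts of a
decomposition of a signed measure it gives its `‖·‖_W` norm. -/
noncomputable def wDist (ν₁ ν₂ : Measure K) : ℝ≥0∞ :=
  ⨆ g : {g : K → ℝ // LipschitzWith 1 g ∧ ∀ z, |g z| ≤ 1},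
    ENNReal.ofReal |∫ z, g.val z ∂ν₁ - ∫ z, g.val z ∂ν₂|

/-- The skew product `F(x,z) = (σ(x), G(x,z))`. -/
def skew (G : SigmaA N A × K → K) (p : SigmaA N A × K) : SigmaA N A × K :=
  (shift p.1, G p)

/-- The transfer operator `F^* μ (E) = μ (F⁻¹ E)` acting on signed measures. -/
noncomputable def transfer (G : SigmaA N A × K → K)
    (μ : SignedMeasure (SigmaA N A × K)) : SignedMeasure (SigmaA N A × K) :=
  μ.map (skew G)

/-- Condition (G1): uniform contraction of the vertical fibers with rate `α`. -/
def CondG1 (G : SigmaA N A × K → K) (α : ℝ) : Prop :=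
  ∀ (x : SigmaA N A) (z₁ z₂ : K), dist (G (x, z₁)) (G (x, z₂)) ≤ α * dist z₁ z₂

/-- Condition (G2): `x ↦ G(x,z)` is `d_θ`-Lipschitz with constant `H`,
uniformly in `z`. -/
def CondG2 (θ : ℝ) (G : SigmaA N A × K → K) (H : ℝ) : Prop :=
  ∀ (z : K) (x y : SigmaA N A), dist (G (x, z)) (G (y, z)) ≤ H * dTheta θ x y

/-- `T` is (the path `γ ↦ μ|_γ` of) a disintegration of `μ` along the vertical
fibers, over the reference measure `m`: `μ(E) = ∫ (μ|_γ)(E ∩ γ) dm(γ)`. -/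
def IsDisint (m : Measure (SigmaA N A)) (μ : Measure (SigmaA N A × K))
    (T : SigmaA N A → Measure K) : Prop :=
  (∀ E : Set (SigmaA N A × K), MeasurableSet E →
      μ E = ∫⁻ γ, T γ {z | (γ, z) ∈ E} ∂m) ∧
  ∀ E : Set K, MeasurableSet E → Measurable fun γ => T γ E

/-- The (essential) `‖·‖_W`-Lipschitz constant of a path of measures,
`|Γ|_θ^ω = ess sup_{γ₁ ≠ γ₂} ‖Γ(γ₁) - Γ(γ₂)‖_W / d_θ(γ₁,γ₂)`. -/
noncomputable def pathLip (m : Measure (SigmaA N A)) (θ : ℝ)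
    (T : SigmaA N A → Measure K) : ℝ≥0∞ :=
  essSup (fun p : SigmaA N A × SigmaA N A =>
    wDist (T p.1) (T p.2) / ENNReal.ofReal (dTheta θ p.1 p.2)) (m.prod m)

/-- The Lipschitz constant `|μ|_θ` of a positive measure: the infimum over
disintegrations `ω` of `μ` of `|μ|_θ^ω`. -/
noncomputable def lipDisint (m : Measure (SigmaA N A)) (θ : ℝ)
    (μ : Measure (SigmaA N A × K)) : ℝ≥0∞ :=
  ⨅ T : {T : SigmaA N A → Measure K // IsDisint m μ T}, pathLip m θ T.val

/-- The fiberwise transfer formula: the path representing `F^*μ` induced by the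
path `T` representing `μ`, i.e.
`γ ↦ Σ_i 1_{σ([i])}(γ) (F_{iγ})_*(T(iγ)) / J_{m,σ_i}(iγ)`. -/
noncomputable def transferPath (G : SigmaA N A × K → K) (Jm : Fin N → SigmaA N A → ℝ)
    (T : SigmaA N A → Measure K) : SigmaA N A → Measure K :=
  fun γ => ∑ i : Fin N, if h : A i (γ.val 0) = true then
      ENNReal.ofReal ((Jm i (prepend i γ h))⁻¹) •
        ((T (prepend i γ h)).map fun z => G (prepend i γ h, z))
    else 0

variable [BorelSpace K] [CompactSpace K] [Nonempty K]

/-- The fiberwise restriction `μ|_γ = π₂_* (φ₁(γ) μ_γ)` of a finite positive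
measure `μ` on `Σ_A^+ × K`, where `({μ_γ}_γ, φ₁ m)` is the Rokhlin
disintegration of `μ` along the vertical fibers and `φ₁ = d(π₁_*μ)/dm`. -/
noncomputable def fiberR (m : Measure (SigmaA N A))
    (μ : Measure (SigmaA N A × K)) (γ : SigmaA N A) : Measure K := by
  by_cases h : IsFiniteMeasure μ
  · haveI := h
    exact (μ.fst.rnDeriv m γ) • μ.condKernel γ
  · exact 0

/-- The norm `‖μ‖_∞ = ess sup_γ ‖μ|_γ‖_W` of a signed measure written as a
difference `μ = μ₁ - μ₂` of positive measures. -/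
noncomputable def infNormPair (m : Measure (SigmaA N A))
    (μ₁ μ₂ : Measure (SigmaA N A × K)) : ℝ≥0∞ :=
  essSup (fun γ => wDist (fiberR m μ₁ γ) (fiberR m μ₂ γ)) m

/-- The marginal density `φ₁ = d(π₁_*μ)/dm` of the signed measure `μ = μ₁ - μ₂`. -/
noncomputable def phiPair (m : Measure (SigmaA N A))
    (μ₁ μ₂ : Measure (SigmaA N A × K)) (γ : SigmaA N A) : ℝ :=
  (μ₁.fst.rnDeriv m γ).toReal - (μ₂.fst.rnDeriv m γ).toReal

/-- Membership in `AB`: both parts are finite with first marginal absolutely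
continuous with respect to `m`. -/
def MemABPair (m : Measure (SigmaA N A)) (μ₁ μ₂ : Measure (SigmaA N A × K)) : Prop :=
  μ₁.fst ≪ m ∧ μ₂.fst ≪ m ∧ IsFiniteMeasure μ₁ ∧ IsFiniteMeasure μ₂

/-- Membership in `S^∞`: `μ ∈ AB`, `‖μ‖_∞ < ∞` and the marginal density `φ₁`
has a `d_θ`-Lipschitz version. -/
def MemSPair (m : Measure (SigmaA N A)) (θ : ℝ)
    (μ₁ μ₂ : Measure (SigmaA N A × K)) : Prop :=
  MemABPair m μ₁ μ₂ ∧ infNormPair m μ₁ μ₂ < ⊤ ∧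
    ∃ ψ : SigmaA N A → ℝ, ψ =ᵐ[m] phiPair m μ₁ μ₂ ∧ LipD (dTheta θ) ψ

/-- `‖φ₁‖_θ`, computed on the best version of the marginal density. -/
noncomputable def thetaNormMu (m : Measure (SigmaA N A)) (θ : ℝ)
    (μ₁ μ₂ : Measure (SigmaA N A × K)) : ℝ≥0∞ :=
  ⨅ ψ : {ψ : SigmaA N A → ℝ // ψ =ᵐ[m] phiPair m μ₁ μ₂}, thetaNorm (dTheta θ) ψ.val

/-- The norm `‖μ‖_{S^∞} = ‖φ₁‖_θ + ‖μ‖_∞`. -/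
noncomputable def sNormPair (m : Measure (SigmaA N A)) (θ : ℝ)
    (μ₁ μ₂ : Measure (SigmaA N A × K)) : ℝ≥0∞ :=
  thetaNormMu m θ μ₁ μ₂ + infNormPair m μ₁ μ₂

/-- Positive part of a signed measure. -/
noncomputable def jPos {X : Type*} [MeasurableSpace X] (μ : SignedMeasure X) : Measure X :=
  μ.toJordanDecomposition.posPart

/-- Negative part of a signed measure. -/
noncomputable def jNeg {X : Type*} [MeasurableSpace X] (μ : SignedMeasure X) : Measure X :=
  μ.toJordanDecomposition.negPart

/-- Membership in `AB` for signed measures. -/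
def MemAB (m : Measure (SigmaA N A)) (μ : SignedMeasure (SigmaA N A × K)) : Prop :=
  MemABPair m (jPos μ) (jNeg μ)

/-- Membership in `S^∞` for signed measures. -/
def MemS (m : Measure (SigmaA N A)) (θ : ℝ) (μ : SignedMeasure (SigmaA N A × K)) : Prop :=
  MemSPair m θ (jPos μ) (jNeg μ)

/-- `‖μ‖_∞` for signed measures. -/
noncomputable def infNorm (m : Measure (SigmaA N A))
    (μ : SignedMeasure (SigmaA N A × K)) : ℝ≥0∞ :=
  infNormPair m (jPos μ) (jNeg μ)

/-- `‖μ‖_{S^∞}` for signed measures. -/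
noncomputable def sNorm (m : Measure (SigmaA N A)) (θ : ℝ)
    (μ : SignedMeasure (SigmaA N A × K)) : ℝ≥0∞ :=
  sNormPair m θ (jPos μ) (jNeg μ)

/-- `‖φ₁‖_∞` of the marginal density of a signed measure. -/
noncomputable def phiSup (m : Measure (SigmaA N A))
    (μ : SignedMeasure (SigmaA N A × K)) : ℝ≥0∞ :=
  essSup (fun γ => ENNReal.ofReal |phiPair m (jPos μ) (jNeg μ) γ|) m

/-!
Contraction along the fibers makes the iterates `F^n_*` of any two probability measures with the
same marginal on the base merge, when tested against integrands equicontinuous in the fiber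
variable. An invariant measure is therefore determined by its marginal, and every weak limit point
of `F^n_* (m × δ_z)` is invariant with marginal `m`. Since `G` is only measurable in the base
variable, `φ ∘ F` is not continuous for continuous `φ`; this is harmless because, among measures
with marginal `m`, weak convergence can be tested against all of `L¹(m; C(K))`. Finally, if the
marginal of an invariant measure has a Lipschitz density `ψ`, then `∫ (ψ - 1) dm` over `σ^{-n} E`
does not depend on `n`, while the spectral gap sends it to `0`; hence `ψ = 1` almost everywhere.
-/

section YoungMeasures

open Filter Topology
open scoped BoundedContinuousFunction

variable {X Y : Type*} [MeasurableSpace X] [TopologicalSpace Y] [CompactSpace Y] [T2Space Y]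
  [SecondCountableTopology Y]

theorem stronglyMeasurable_of_measurable_eval {E : Type*} [TopologicalSpace E] [PolishSpace E]
    [MeasurableSpace E] [BorelSpace E] {h : X → C(Y, E)} (hh : ∀ y, Measurable fun x ↦ h x y) :
    StronglyMeasurable h := by
  rcases isEmpty_or_nonempty Y with _ | _
  · exact stronglyMeasurable_const' fun x x' ↦ Subsingleton.elim _ _
  let := TopologicalSpace.upgradeIsCompletelyMetrizable E
  borelize C(Y, E)
  let e : C(Y, E) → ℕ → E := fun f n ↦ f (TopologicalSpace.denseSeq Y n)
  have he : Continuous e := by fun_prop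
  have he_inj : Function.Injective e := fun f g hfg ↦ DFunLike.coe_injective <|
    (TopologicalSpace.denseRange_denseSeq Y).equalizer f.continuous g.continuous hfg
  -- Injective and continuous, `e` is a measurable embedding by the Lusin–Souslin theorem.
  exact ((he.measurableEmbedding he_inj).measurable_comp_iff.mp
    (measurable_pi_lambda _ fun n ↦ hh _)).stronglyMeasurable

variable [MeasurableSpace Y] [OpensMeasurableSpace Y] {h : X → C(Y, ℝ)}

theorem integrable_eval {ρ : Measure (X × Y)} (hh : Integrable h ρ.fst) :
    Integrable (fun p ↦ h p.1 p.2) ρ := by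
  have hfst : Integrable (fun p : X × Y ↦ h p.1) ρ := hh.comp_measurable measurable_fst
  refine hfst.norm.mono' ?_ (ae_of_all _ fun p ↦ (h p.1).norm_coe_le_norm p.2)
  exact (continuous_eval (F := C(Y, ℝ))).comp_aestronglyMeasurable
    (hfst.aestronglyMeasurable.prodMk measurable_snd.stronglyMeasurable.aestronglyMeasurable)

theorem abs_integral_eval_sub_le {ρ : Measure (X × Y)} {g : X → C(Y, ℝ)}
    (hh : Integrable h ρ.fst) (hg : Integrable g ρ.fst) :
    |∫ p, h p.1 p.2 ∂ρ - ∫ p, g p.1 p.2 ∂ρ| ≤ ∫ x, ‖h x - g x‖ ∂ρ.fst := by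
  have hsub : Integrable (fun x ↦ ‖h x - g x‖) ρ.fst := (hh.sub hg).norm
  rw [← integral_sub (integrable_eval hh) (integrable_eval hg), Measure.fst,
    integral_map measurable_fst.aemeasurable hsub.aestronglyMeasurable]
  exact norm_integral_le_of_norm_le (hsub.comp_measurable measurable_fst)
    (ae_of_all _ fun p ↦ (h p.1 - g p.1).norm_coe_le_norm p.2)

variable [TopologicalSpace X]

theorem isCompact_setOf_fst_eq [PolishSpace X] [BorelSpace X] [BorelSpace Y] (m : Measure X)
    [IsProbabilityMeasure m] :
    IsCompact {μ : ProbabilityMeasure (X × Y) | (μ : Measure (X × Y)).fst = m} := by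
  set S := {μ : ProbabilityMeasure (X × Y) | (μ : Measure (X × Y)).fst = m}
  have hS_closed : IsClosed S := by
    have hS : S = (fun μ ↦ μ.map continuous_fst.measurable.aemeasurable) ⁻¹'
        {(⟨m, ‹_›⟩ : ProbabilityMeasure X)} :=
      Set.ext fun μ ↦ ⟨fun hμ ↦ Subtype.ext hμ, fun hμ ↦ congrArg Subtype.val hμ⟩
    rw [hS]
    exact isClosed_singleton.preimage (ProbabilityMeasure.continuous_map continuous_fst)
  have hS_tight : IsTightMeasureSet
      {((μ : ProbabilityMeasure (X × Y)) : Measure (X × Y)) | μ ∈ S} := by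
    refine .prodMk ((isTightMeasureSet_singleton (μ := m)).subset ?_) .of_compactSpace
    rintro _ ⟨_, ⟨μ, hμ, rfl⟩, rfl⟩
    exact hμ
  exact hS_closed.closure_eq ▸ isCompact_closure_of_isTightMeasureSet hS_tight

theorem tendsto_integral_eval_of_fst_eq [NormalSpace X] [BorelSpace X]
    {m : Measure X} [m.WeaklyRegular] (hh : Integrable h m) {ι : Type*} {l : Filter ι}
    {ν : ι → ProbabilityMeasure (X × Y)} {μ : ProbabilityMeasure (X × Y)}
    (hν : ∀ i, (ν i : Measure (X × Y)).fst = m) (hμ : (μ : Measure (X × Y)).fst = m)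
    (hlim : Tendsto ν l (𝓝 μ)) :
    Tendsto (fun i ↦ ∫ p, h p.1 p.2 ∂(ν i : Measure (X × Y))) l
      (𝓝 (∫ p, h p.1 p.2 ∂(μ : Measure (X × Y)))) := by
  let I (f : X → C(Y, ℝ)) (ρ : ProbabilityMeasure (X × Y)) : ℝ :=
    ∫ p, f p.1 p.2 ∂(ρ : Measure (X × Y))
  change Tendsto (fun i ↦ I h (ν i)) l (𝓝 (I h μ))
  rw [Metric.tendsto_nhds]
  intro ε hε
  -- Continuous integrands `X →ᵇ C(Y, ℝ)` are dense in `L¹(m; C(Y, ℝ))`.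
  obtain ⟨g, hgh, hg⟩ := hh.exists_boundedContinuous_integral_sub_le (by positivity : 0 < ε / 3)
  have happrox (ρ : ProbabilityMeasure (X × Y)) (hρ : (ρ : Measure (X × Y)).fst = m) :
      dist (I h ρ) (I g ρ) ≤ ε / 3 := by
    subst hρ
    exact (abs_integral_eval_sub_le hh hg).trans hgh
  have hg_lim : Tendsto (fun i ↦ I g (ν i)) l (𝓝 (I g μ)) :=
    ProbabilityMeasure.tendsto_iff_forall_integral_tendsto.mp hlim <|
      .ofNormedAddCommGroup (fun p ↦ g p.1 p.2) (by fun_prop) ‖g‖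
        fun p ↦ ((g p.1).norm_coe_le_norm p.2).trans (g.norm_coe_le_norm p.1)
  filter_upwards [Metric.tendsto_nhds.mp hg_lim (ε / 3) (by positivity)] with i hi
  have hμ_approx := happrox μ hμ
  rw [dist_comm] at hμ_approx
  linarith [dist_triangle4 (I h (ν i)) (I g (ν i)) (I g μ) (I h μ), happrox (ν i) (hν i)]

theorem tendsto_integral_of_fst_eq_of_continuous_right [NormalSpace X] [BorelSpace X]
    {m : Measure X} [IsFiniteMeasure m] [m.WeaklyRegular] {φ : X × Y → ℝ} {C : ℝ}
    (hφm : Measurable φ) (hφC : ∀ p, |φ p| ≤ C) (hφ : ∀ x, Continuous fun y ↦ φ (x, y)) {ι : Type*}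
    {l : Filter ι} {ν : ι → ProbabilityMeasure (X × Y)} {μ : ProbabilityMeasure (X × Y)}
    (hν : ∀ i, (ν i : Measure (X × Y)).fst = m) (hμ : (μ : Measure (X × Y)).fst = m)
    (hlim : Tendsto ν l (𝓝 μ)) :
    Tendsto (fun i ↦ ∫ p, φ p ∂(ν i : Measure (X × Y))) l
      (𝓝 (∫ p, φ p ∂(μ : Measure (X × Y)))) := by
  let h (x : X) : C(Y, ℝ) := ⟨fun y ↦ φ (x, y), hφ x⟩
  have hmeas : StronglyMeasurable h :=
    stronglyMeasurable_of_measurable_eval fun y ↦ hφm.comp measurable_prodMk_right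
  have hbound x : ‖h x‖ ≤ max C 0 :=
    (ContinuousMap.norm_le _ (le_max_right _ _)).mpr fun y ↦ le_max_of_le_left (hφC (x, y))
  exact tendsto_integral_eval_of_fst_eq
    (.of_bound hmeas.aestronglyMeasurable _ (ae_of_all _ hbound)) hν hμ hlim

end YoungMeasures

section SkewProducts

open Filter Topology
open scoped NNReal BoundedContinuousFunction

variable {X Y : Type*}

theorem uniformEquicontinuous_mul [UniformSpace Y] {f : X → ℝ} {C : ℝ}
    (hf : ∀ x, |f x| ≤ C) {k : Y → ℝ} (hk : UniformContinuous k) :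
    UniformEquicontinuous fun x y ↦ f x * k y := by
  have hmul : UniformEquicontinuous fun (x : X) (t : ℝ) ↦ f x * t :=
    LipschitzWith.uniformEquicontinuous _ C.toNNReal fun x ↦ .of_dist_le_mul fun t t' ↦ by
      rw [Real.dist_eq, ← mul_sub, abs_mul]
      exact mul_le_mul_of_nonneg_right ((hf x).trans (Real.le_coe_toNNReal C)) (abs_nonneg _)
  exact fun U hU ↦ hk.eventually (hmul U hU)

theorem ext_of_integral_uniformEquicontinuous [TopologicalSpace X] [HasOuterApproxClosed X]
    [MeasurableSpace X] [BorelSpace X] [PseudoMetricSpace Y] [CompactSpace Y] [MeasurableSpace Y]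
    [BorelSpace Y] {μ ν : Measure (X × Y)} [IsFiniteMeasure μ] [IsFiniteMeasure ν]
    (h : ∀ φ : X × Y →ᵇ ℝ, (UniformEquicontinuous fun x y ↦ φ (x, y)) →
      ∫ p, φ p ∂μ = ∫ p, φ p ∂ν) : μ = ν :=
  Measure.ext_of_integral_mul_boundedContinuousFunction fun f k ↦
    h (f.compContinuous .fst * k.compContinuous .snd) <| uniformEquicontinuous_mul
      f.norm_coe_le_norm (CompactSpace.uniformContinuous_of_continuous k.continuous)

/-- The skew product `(x, y) ↦ (s x, G (x, y))` over an arbitrary base map `s`; `skew G` is the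
case where `s` is the shift. -/
def skewProduct (s : X → X) (G : X × Y → Y) (p : X × Y) : X × Y :=
  (s p.1, G p)

variable {s : X → X} {G : X × Y → Y}

theorem semiconj_fst_skewProduct : Function.Semiconj Prod.fst (skewProduct s G) s :=
  fun _ ↦ rfl

theorem iterate_skewProduct_mk (n : ℕ) (x : X) (y : Y) :
    (skewProduct s G)^[n] (x, y) = (s^[n] x, ((skewProduct s G)^[n] (x, y)).2) :=
  Prod.ext (semiconj_fst_skewProduct.iterate_right n (x, y)) rfl

theorem lipschitzWith_snd_iterate_skewProduct [PseudoEMetricSpace Y] {α : ℝ≥0}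
    (hG : ∀ x, LipschitzWith α fun y ↦ G (x, y)) (n : ℕ) (x : X) :
    LipschitzWith (α ^ n) fun y ↦ ((skewProduct s G)^[n] (x, y)).2 := by
  induction n with
  | zero => simpa using! LipschitzWith.id
  | succ n ih =>
    have hstep (y : Y) : ((skewProduct s G)^[n + 1] (x, y)).2 =
        G (s^[n] x, ((skewProduct s G)^[n] (x, y)).2) := by
      rw [Function.iterate_succ_apply', iterate_skewProduct_mk]
      rfl
    simpa only [hstep, pow_succ'] using! (hG (s^[n] x)).comp ih

theorem tendsto_iterate_skewProduct_sub [PseudoMetricSpace Y] {α : ℝ≥0} (hα : α < 1)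
    (hG : ∀ x, LipschitzWith α fun y ↦ G (x, y)) {φ : X × Y → ℝ}
    (hφ : UniformEquicontinuous fun x y ↦ φ (x, y)) (x : X) (y y' : Y) :
    Tendsto (fun n ↦ φ ((skewProduct s G)^[n] (x, y)) - φ ((skewProduct s G)^[n] (x, y')))
      atTop (𝓝 0) := by
  have hpow : Tendsto (fun n ↦ (α : ℝ) ^ n * dist y y') atTop (𝓝 0) := by
    simpa using (tendsto_pow_atTop_nhds_zero_of_lt_one α.coe_nonneg
      (NNReal.coe_lt_one.mpr hα)).mul_const (dist y y')
  have hsnd : Tendsto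
      (fun n ↦ (((skewProduct s G)^[n] (x, y)).2, ((skewProduct s G)^[n] (x, y')).2))
      atTop (uniformity Y) :=
    tendsto_uniformity_iff_dist_tendsto_zero.mpr <| squeeze_zero (fun _ ↦ dist_nonneg)
      (fun n ↦ (lipschitzWith_snd_iterate_skewProduct hG n x).dist_le_mul y y') hpow
  rw [Metric.tendsto_nhds]
  intro ε hε
  filter_upwards [hsnd.eventually (hφ _ (Metric.dist_mem_uniformity hε))] with n hn
  rw [iterate_skewProduct_mk, iterate_skewProduct_mk (y := y'), dist_zero_right]
  exact hn (s^[n] x)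

variable [MeasurableSpace X] [MeasurableSpace Y]

theorem measurable_skewProduct (hs : Measurable s) (hGm : Measurable G) :
    Measurable (skewProduct s G) :=
  (hs.comp measurable_fst).prodMk hGm

theorem fst_map_iterate_skewProduct (hs : Measurable s) (hGm : Measurable G)
    (μ : Measure (X × Y)) (n : ℕ) : (μ.map (skewProduct s G)^[n]).fst = μ.fst.map s^[n] := by
  rw [Measure.fst, Measure.fst,
    Measure.map_map measurable_fst ((measurable_skewProduct hs hGm).iterate n),
    Measure.map_map (hs.iterate n) measurable_fst,
    (semiconj_fst_skewProduct.iterate_right n).comp_eq]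

variable [MetricSpace Y] {α : ℝ≥0} {φ : X × Y → ℝ} {C : ℝ}

theorem tendsto_integral_iterate_sub_section (hs : Measurable s) (hGm : Measurable G) (hα : α < 1)
    (hG : ∀ x, LipschitzWith α fun y ↦ G (x, y)) (hφm : Measurable φ) (hφC : ∀ p, |φ p| ≤ C)
    (hφ : UniformEquicontinuous fun x y ↦ φ (x, y)) (z : Y) (μ : Measure (X × Y))
    [IsFiniteMeasure μ] :
    Tendsto (fun n ↦ ∫ p, φ ((skewProduct s G)^[n] p) ∂μ -
      ∫ x, φ ((skewProduct s G)^[n] (x, z)) ∂μ.fst) atTop (𝓝 0) := by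
  have hφF n : Measurable fun p ↦ φ ((skewProduct s G)^[n] p) :=
    hφm.comp ((measurable_skewProduct hs hGm).iterate n)
  have hφFz n : Measurable fun x ↦ φ ((skewProduct s G)^[n] (x, z)) :=
    (hφF n).comp measurable_prodMk_right
  have hφFfst n : Measurable fun p : X × Y ↦ φ ((skewProduct s G)^[n] (p.1, z)) :=
    (hφFz n).comp measurable_fst
  have hsub n : ∫ p, φ ((skewProduct s G)^[n] p) ∂μ -
      ∫ x, φ ((skewProduct s G)^[n] (x, z)) ∂μ.fst =
      ∫ p, φ ((skewProduct s G)^[n] p) - φ ((skewProduct s G)^[n] (p.1, z)) ∂μ := by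
    rw [Measure.fst, integral_map measurable_fst.aemeasurable (hφFz n).aestronglyMeasurable,
      integral_sub (.of_bound (hφF n).aestronglyMeasurable C (ae_of_all _ fun _ ↦ hφC _))
        (.of_bound (hφFfst n).aestronglyMeasurable C (ae_of_all _ fun _ ↦ hφC _))]
  simp only [hsub]
  rw [← integral_zero (X × Y) ℝ (μ := μ)]
  exact tendsto_integral_of_dominated_convergence (fun _ ↦ C + C)
    (fun n ↦ ((hφF n).sub (hφFfst n)).aestronglyMeasurable)
    (integrable_const _)
    (fun n ↦ ae_of_all _ fun p ↦ (norm_sub_le _ _).trans (add_le_add (hφC _) (hφC _)))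
    (ae_of_all _ fun ⟨x, y⟩ ↦ tendsto_iterate_skewProduct_sub hα hG hφ x y z)

theorem tendsto_integral_iterate_sub_of_fst_eq [Nonempty Y] (hs : Measurable s)
    (hGm : Measurable G) (hα : α < 1) (hG : ∀ x, LipschitzWith α fun y ↦ G (x, y))
    (hφm : Measurable φ) (hφC : ∀ p, |φ p| ≤ C) (hφ : UniformEquicontinuous fun x y ↦ φ (x, y))
    {μ ν : Measure (X × Y)} [IsFiniteMeasure μ] [IsFiniteMeasure ν] (hμν : μ.fst = ν.fst) :
    Tendsto (fun n ↦ ∫ p, φ ((skewProduct s G)^[n] p) ∂μ - ∫ p, φ ((skewProduct s G)^[n] p) ∂ν)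
      atTop (𝓝 0) := by
  obtain ⟨z⟩ := ‹Nonempty Y›
  have hμ := tendsto_integral_iterate_sub_section hs hGm hα hG hφm hφC hφ z μ
  have hν := tendsto_integral_iterate_sub_section hs hGm hα hG hφm hφC hφ z ν
  simpa [hμν] using hμ.sub hν

variable [TopologicalSpace X] [BorelSpace X] [CompactSpace Y] [BorelSpace Y]

theorem eq_of_measurePreserving_skewProduct [HasOuterApproxClosed X] [Nonempty Y]
    (hs : Measurable s) (hGm : Measurable G) (hα : α < 1)
    (hG : ∀ x, LipschitzWith α fun y ↦ G (x, y)) {μ ν : Measure (X × Y)} [IsFiniteMeasure μ]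
    [IsFiniteMeasure ν] (hμ : MeasurePreserving (skewProduct s G) μ μ)
    (hν : MeasurePreserving (skewProduct s G) ν ν) (hμν : μ.fst = ν.fst) : μ = ν := by
  refine ext_of_integral_uniformEquicontinuous fun φ hφ ↦ ?_
  have hconst {ρ : Measure (X × Y)} (hρ : MeasurePreserving (skewProduct s G) ρ ρ) (n : ℕ) :
      ∫ p, φ ((skewProduct s G)^[n] p) ∂ρ = ∫ p, φ p ∂ρ := by
    have hn := hρ.iterate n
    rw [← integral_map hn.aemeasurable (by fun_prop), hn.map_eq]
  have hmerge := tendsto_integral_iterate_sub_of_fst_eq hs hGm hα hG (by fun_prop)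
    φ.norm_coe_le_norm hφ hμν
  simp only [hconst hμ, hconst hν] at hmerge
  exact sub_eq_zero.mp (tendsto_const_nhds_iff.mp hmerge)

theorem measurePreserving_skewProduct_of_tendsto [NormalSpace X] [HasOuterApproxClosed X]
    [Nonempty Y] (hGm : Measurable G) (hα : α < 1) (hG : ∀ x, LipschitzWith α fun y ↦ G (x, y))
    {ρ : Measure (X × Y)} [IsFiniteMeasure ρ] [ρ.fst.WeaklyRegular]
    (hs : MeasurePreserving s ρ.fst ρ.fst) {ι : Type*} {l : Filter ι} [l.NeBot] {τ : ι → ℕ}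
    (hτ : Tendsto τ l atTop) {ν : ι → ProbabilityMeasure (X × Y)}
    (hν : ∀ i, (ν i : Measure (X × Y)) = ρ.map (skewProduct s G)^[τ i])
    {μ : ProbabilityMeasure (X × Y)} (hlim : Tendsto ν l (𝓝 μ))
    (hμ : (μ : Measure (X × Y)).fst = ρ.fst) :
    MeasurePreserving (skewProduct s G) (μ : Measure (X × Y)) μ := by
  set F := skewProduct s G
  have hF : Measurable F := measurable_skewProduct hs.measurable hGm
  have hFright x : Continuous fun y ↦ F (x, y) :=
    (continuous_const (y := s x)).prodMk (hG x).continuous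
  refine ⟨hF, (ext_of_integral_uniformEquicontinuous fun φ hφ ↦ ?_).symm⟩
  have hφF : Measurable fun p ↦ φ (F p) := φ.continuous.measurable.comp hF
  have hφFn n : Measurable fun p ↦ φ (F^[n] p) :=
    φ.continuous.measurable.comp (hF.iterate n)
  have hνfst i : (ν i : Measure (X × Y)).fst = ρ.fst := by
    rw [hν, fst_map_iterate_skewProduct hs.measurable hGm, (hs.iterate _).map_eq]
  have hρF : ρ.fst = (ρ.map F).fst := by
    simpa [hs.map_eq] using (fst_map_iterate_skewProduct hs.measurable hGm ρ 1).symm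
  have hmerge := (tendsto_integral_iterate_sub_of_fst_eq hs.measurable hGm hα hG
    (by fun_prop) φ.norm_coe_le_norm hφ hρF).comp hτ
  have hφlim := tendsto_integral_of_fst_eq_of_continuous_right (φ := φ) (by fun_prop)
    φ.norm_coe_le_norm (by fun_prop) hνfst hμ hlim
  have hφFlim := tendsto_integral_of_fst_eq_of_continuous_right hφF
    (fun p ↦ φ.norm_coe_le_norm (F p)) (fun x ↦ φ.continuous.comp (hFright x)) hνfst hμ
    hlim
  have hφν i : ∫ p, φ p ∂(ν i : Measure (X × Y)) = ∫ p, φ (F^[τ i] p) ∂ρ := by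
    rw [hν, integral_map (hF.iterate _).aemeasurable (by fun_prop)]
  have hφFν i : ∫ p, φ (F p) ∂(ν i : Measure (X × Y)) = ∫ p, φ (F^[τ i] p) ∂(ρ.map F) := by
    rw [hν, integral_map (hF.iterate _).aemeasurable hφF.aestronglyMeasurable,
      integral_map hF.aemeasurable (hφFn _).aestronglyMeasurable]
    simp only [← Function.iterate_succ_apply, ← Function.iterate_succ_apply']
  rw [integral_map hF.aemeasurable (by fun_prop), ← sub_eq_zero]
  exact tendsto_nhds_unique (hφlim.sub hφFlim) <| by
    simpa only [hφν, Function.comp_def, hφFν] using hmerge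

theorem exists_measurePreserving_skewProduct [PolishSpace X] [Nonempty Y]
    (hGm : Measurable G) (hα : α < 1) (hG : ∀ x, LipschitzWith α fun y ↦ G (x, y))
    {m : Measure X} [IsProbabilityMeasure m] (hs : MeasurePreserving s m m) :
    ∃ μ : Measure (X × Y), IsProbabilityMeasure μ ∧ MeasurePreserving (skewProduct s G) μ μ ∧
      μ.fst = m := by
  obtain ⟨z⟩ := ‹Nonempty Y›
  set F := skewProduct s G
  have hF : Measurable F := measurable_skewProduct hs.measurable hGm
  let ρ : Measure (X × Y) := m.prod (.dirac z)
  let ν (n : ℕ) : ProbabilityMeasure (X × Y) :=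
    ⟨ρ.map F^[n], Measure.isProbabilityMeasure_map (hF.iterate n).aemeasurable⟩
  have hρ : ρ.fst = m := Measure.fst_prod
  have hν n : (ν n : Measure (X × Y)).fst = m := by
    simp [ν, F, hρ, fst_map_iterate_skewProduct hs.measurable hGm, (hs.iterate n).map_eq]
  obtain ⟨μ, hμ, τ, hτ, hlim⟩ := (isCompact_setOf_fst_eq m).tendsto_subseq hν
  rw [← hρ] at hs
  exact ⟨μ, inferInstance, measurePreserving_skewProduct_of_tendsto hGm hα hG hs hτ.tendsto_atTop
    (fun _ ↦ rfl) hlim (hμ.trans hρ.symm), hμ⟩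

end SkewProducts

section SymbolicSpace

theorem isClosed_setOf_admissible (A : Fin N → Fin N → Bool) :
    IsClosed {x : ℕ → Fin N | ∀ i, A (x i) (x (i + 1)) = true} := by
  rw [ofPred_forall]
  refine isClosed_iInter fun i ↦ isClosed_eq ?_ continuous_const
  have hA : Continuous fun p : Fin N × Fin N ↦ A p.1 p.2 := continuous_of_discreteTopology
  exact hA.comp (f := fun x : ℕ → Fin N ↦ (x i, x (i + 1)))
    ((continuous_apply i).prodMk (continuous_apply (i + 1)))

instance : CompactSpace (SigmaA N A) :=
  isCompact_iff_compactSpace.mp (isClosed_setOf_admissible A).isCompact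

instance : PolishSpace (SigmaA N A) :=
  have : PolishSpace (Fin N) := inferInstance
  (isClosed_setOf_admissible A).polishSpace

theorem continuous_shift : Continuous (shift : SigmaA N A → SigmaA N A) :=
  Continuous.subtype_mk (f := fun x : SigmaA N A ↦ fun i ↦ x.val (i + 1))
    (continuous_pi fun i ↦ (continuous_apply (i + 1)).comp continuous_subtype_val) _

variable {θ : ℝ}

theorem dTheta_self (x : SigmaA N A) : dTheta θ x x = 0 := by
  simp [dTheta]

theorem dTheta_nonneg (hθ0 : 0 ≤ θ) (x y : SigmaA N A) : 0 ≤ dTheta θ x y :=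
  tsum_nonneg fun i ↦ mul_nonneg (pow_nonneg hθ0 i) (by split_ifs <;> norm_num)

theorem norm_dTheta_term_le (hθ0 : 0 ≤ θ) (x y : SigmaA N A) (i : ℕ) :
    ‖θ ^ i * (if x.val i = y.val i then (0 : ℝ) else 1)‖ ≤ θ ^ i := by
  rw [norm_mul, norm_pow, Real.norm_of_nonneg hθ0]
  exact mul_le_of_le_one_right (pow_nonneg hθ0 i) (by split_ifs <;> simp)

theorem pow_le_dTheta_of_ne (hθ0 : 0 ≤ θ) (hθ1 : θ < 1) {x y : SigmaA N A} {i : ℕ}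
    (hi : x.val i ≠ y.val i) : θ ^ i ≤ dTheta θ x y := by
  have hsum : Summable fun i ↦ θ ^ i * (if x.val i = y.val i then (0 : ℝ) else 1) :=
    .of_norm_bounded (summable_geometric_of_lt_one hθ0 hθ1) (norm_dTheta_term_le hθ0 x y)
  simpa [dTheta, hi] using hsum.le_tsum i fun j _ ↦
    mul_nonneg (pow_nonneg hθ0 j) (by split_ifs <;> norm_num)

theorem dTheta_pos (hθ0 : 0 < θ) (hθ1 : θ < 1) {x y : SigmaA N A} (hxy : x ≠ y) :
    0 < dTheta θ x y := by
  obtain ⟨i, hi⟩ := Function.ne_iff.mp (Subtype.coe_injective.ne hxy)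
  exact (pow_pos hθ0 i).trans_le (pow_le_dTheta_of_ne hθ0.le hθ1 hi)

theorem continuous_dTheta_left (hθ0 : 0 ≤ θ) (hθ1 : θ < 1) (y : SigmaA N A) :
    Continuous fun x ↦ dTheta θ x y := by
  refine continuous_tsum (fun i ↦ continuous_const.mul ?_)
    (summable_geometric_of_lt_one hθ0 hθ1) fun i x ↦ norm_dTheta_term_le hθ0 x y i
  have hne : Continuous fun a : Fin N ↦ if a = y.val i then (0 : ℝ) else 1 :=
    continuous_of_discreteTopology
  exact hne.comp ((continuous_apply i).comp continuous_subtype_val)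

end SymbolicSpace

section LipschitzFunctions

open Filter Topology

variable {X : Type*} {d : X → X → ℝ} {f : X → ℝ}

theorem LipD.continuous [TopologicalSpace X] (hd : ∀ y, Tendsto (d · y) (𝓝 y) (𝓝 0))
    (hf : LipD d f) : Continuous f := by
  obtain ⟨L, hL⟩ := hf
  refine continuous_iff_continuousAt.mpr fun y ↦ tendsto_iff_dist_tendsto_zero.mpr ?_
  have hLd : Tendsto (fun x ↦ L * d x y) (𝓝 y) (𝓝 0) := by
    simpa using (hd y).const_mul L
  exact squeeze_zero (fun _ ↦ dist_nonneg) (fun x ↦ hL x y) hLd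

theorem LipD.lipConst_lt_top (hd : ∀ x y, 0 ≤ d x y) (hf : LipD d f) : lipConst d f < ⊤ := by
  obtain ⟨L, hL⟩ := hf
  refine (iSup₂_le fun x y ↦ ENNReal.ofReal_le_ofReal ?_).trans_lt
    (ENNReal.ofReal_lt_top (r := max L 0))
  exact div_le_of_le_mul₀ (hd x y) (le_max_right _ _) <|
    (hL x y).trans (mul_le_mul_of_nonneg_right (le_max_left _ _) (hd x y))

theorem lipD_of_lipConst_lt_top (hd : ∀ x, 0 ≤ d x x) (hd_pos : ∀ x y, x ≠ y → 0 < d x y)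
    (hf : lipConst d f < ⊤) : LipD d f := by
  refine ⟨(lipConst d f).toReal, fun x y ↦ ?_⟩
  rcases eq_or_ne x y with rfl | hxy
  · simpa using mul_nonneg ENNReal.toReal_nonneg (hd x)
  · rw [← div_le_iff₀ (hd_pos x y hxy)]
    exact (ENNReal.ofReal_le_iff_le_toReal hf.ne).mp (le_iSup₂_of_le x y le_rfl)

theorem LipD.sub_const (hf : LipD d f) (c : ℝ) : LipD d fun x ↦ f x - c := by
  obtain ⟨L, hL⟩ := hf
  exact ⟨L, fun x y ↦ by simpa using hL x y⟩

theorem supNormE_lt_top_of_continuous [TopologicalSpace X] [CompactSpace X] (hf : Continuous f) :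
    supNormE f < ⊤ := by
  let g : C(X, ℝ) := ⟨f, hf⟩
  exact (iSup_le fun x ↦ ENNReal.ofReal_le_ofReal (g.norm_coe_le_norm x)).trans_lt
    ENNReal.ofReal_lt_top

theorem enorm_integral_le_supNormE_mul [MeasurableSpace X] (m : Measure X) (f : X → ℝ) :
    ‖∫ x, f x ∂m‖ₑ ≤ supNormE f * m univ :=
  calc ‖∫ x, f x ∂m‖ₑ ≤ ∫⁻ x, ‖f x‖ₑ ∂m := enorm_integral_le_lintegral_enorm _
    _ ≤ ∫⁻ _, supNormE f ∂m := lintegral_mono fun x ↦ by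
      rw [Real.enorm_eq_ofReal_abs]
      exact le_iSup (fun x ↦ ENNReal.ofReal |f x|) x
    _ = supNormE f * m univ := lintegral_const _

end LipschitzFunctions

section SpectralGap

open Filter Topology

variable {m : Measure (SigmaA N A)} {Pσ : (SigmaA N A → ℝ) → SigmaA N A → ℝ}
  {φ : SigmaA N A → ℝ}

theorem IsPerronFrobenius.setIntegral_eq (hPF : IsPerronFrobenius m Pσ) (hφ : Integrable φ m)
    {E : Set (SigmaA N A)} (hE : MeasurableSet E) :
    ∫ x in E, Pσ φ x ∂m = ∫ x in shift ⁻¹' E, φ x ∂m := by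
  have hdual := hPF φ (E.indicator 1) hφ (measurable_one.indicator hE)
    ⟨1, fun x ↦ by by_cases hx : x ∈ E <;> simp [hx]⟩
  rw [← integral_indicator hE, ← integral_indicator (continuous_shift.measurable hE)]
  refine Eq.trans (integral_congr_ae (ae_of_all _ fun x ↦ ?_)) (hdual.trans ?_)
  · by_cases hx : x ∈ E <;> simp [hx]
  · congr with x
    by_cases hx : shift x ∈ E <;> simp [hx]

theorem IsPerronFrobenius.setIntegral_iterate_eq (hPF : IsPerronFrobenius m Pσ)
    (hφ : ∀ n, Integrable (Pσ^[n] φ) m) {E : Set (SigmaA N A)} (hE : MeasurableSet E) (n : ℕ) :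
    ∫ x in E, (Pσ^[n] φ) x ∂m = ∫ x in shift^[n] ⁻¹' E, φ x ∂m := by
  induction n generalizing E with
  | zero => rfl
  | succ n ih =>
    rw [Function.iterate_succ_apply', hPF.setIntegral_eq (hφ n) hE,
      ih (continuous_shift.measurable hE), Function.iterate_succ', preimage_comp]

variable {θ D r : ℝ}

theorem LipD.continuous_of_dTheta (hθ0 : 0 ≤ θ) (hθ1 : θ < 1) (hφ : LipD (dTheta θ) φ) :
    Continuous φ :=
  hφ.continuous fun y ↦ by
    simpa [dTheta_self] using (continuous_dTheta_left hθ0 hθ1 y).tendsto y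

theorem LipD.thetaNorm_lt_top (hθ0 : 0 ≤ θ) (hθ1 : θ < 1) (hφ : LipD (dTheta θ) φ) :
    thetaNorm (dTheta θ) φ < ⊤ :=
  ENNReal.add_lt_top.mpr ⟨supNormE_lt_top_of_continuous (hφ.continuous_of_dTheta hθ0 hθ1),
    hφ.lipConst_lt_top (dTheta_nonneg hθ0)⟩

theorem HasGap.lipD_iterate (hθ0 : 0 < θ) (hθ1 : θ < 1) (hgap : HasGap m θ Pσ D r)
    (hφ : LipD (dTheta θ) φ) (hφm : ∫ x, φ x ∂m = 0) (n : ℕ) : LipD (dTheta θ) (Pσ^[n] φ) := by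
  have hfin : thetaNorm (dTheta θ) (Pσ^[n] φ) < ⊤ := (hgap φ hφ hφm n).trans_lt
    (ENNReal.mul_lt_top ENNReal.ofReal_lt_top (hφ.thetaNorm_lt_top hθ0.le hθ1))
  exact lipD_of_lipConst_lt_top (fun x ↦ dTheta_nonneg hθ0.le x x)
    (fun x y hxy ↦ dTheta_pos hθ0 hθ1 hxy) (ENNReal.add_lt_top.mp hfin).2

theorem HasGap.tendsto_supNormE_iterate (hθ0 : 0 ≤ θ) (hθ1 : θ < 1) (hr0 : 0 ≤ r) (hr1 : r < 1)
    (hgap : HasGap m θ Pσ D r) (hφ : LipD (dTheta θ) φ) (hφm : ∫ x, φ x ∂m = 0) :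
    Tendsto (fun n ↦ supNormE (Pσ^[n] φ)) atTop (𝓝 0) := by
  have hpow : Tendsto (fun n ↦ ENNReal.ofReal (D * r ^ n)) atTop (𝓝 0) := by
    simpa using ENNReal.tendsto_ofReal
      ((tendsto_pow_atTop_nhds_zero_of_lt_one hr0 hr1).const_mul D)
  have hbound : Tendsto (fun n ↦ ENNReal.ofReal (D * r ^ n) * thetaNorm (dTheta θ) φ) atTop
      (𝓝 0) := by
    simpa using ENNReal.Tendsto.mul_const hpow (.inr (hφ.thetaNorm_lt_top hθ0 hθ1).ne)
  exact tendsto_of_tendsto_of_tendsto_of_le_of_le tendsto_const_nhds hbound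
    (fun _ ↦ zero_le) fun n ↦ le_self_add.trans (hgap φ hφ hφm n)

theorem HasGap.tendsto_setIntegral_preimage [IsFiniteMeasure m] (hθ0 : 0 < θ) (hθ1 : θ < 1)
    (hr0 : 0 ≤ r) (hr1 : r < 1) (hPF : IsPerronFrobenius m Pσ) (hgap : HasGap m θ Pσ D r)
    (hφ : LipD (dTheta θ) φ) (hφm : ∫ x, φ x ∂m = 0) {E : Set (SigmaA N A)}
    (hE : MeasurableSet E) :
    Tendsto (fun n ↦ ∫ x in shift^[n] ⁻¹' E, φ x ∂m) atTop (𝓝 0) := by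
  have hcont n : Continuous (Pσ^[n] φ) :=
    (hgap.lipD_iterate hθ0 hθ1 hφ hφm n).continuous_of_dTheta hθ0.le hθ1
  have hint n : Integrable (Pσ^[n] φ) m :=
    (hcont n).integrable_of_hasCompactSupport (.of_compactSpace _)
  have hbound : Tendsto (fun n ↦ supNormE (Pσ^[n] φ) * m.restrict E univ) atTop (𝓝 0) := by
    simpa using ENNReal.Tendsto.mul_const
      (hgap.tendsto_supNormE_iterate hθ0.le hθ1 hr0 hr1 hφ hφm)
      (.inr (measure_ne_top (m.restrict E) univ))
  simp only [← hPF.setIntegral_iterate_eq hint hE]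
  exact tendsto_zero_iff_enorm_tendsto_zero.mpr <|
    tendsto_of_tendsto_of_tendsto_of_le_of_le tendsto_const_nhds hbound (fun _ ↦ zero_le)
      fun n ↦ enorm_integral_le_supNormE_mul (m.restrict E) _

theorem HasGap.eq_of_measurePreserving_shift [IsProbabilityMeasure m] (hθ0 : 0 < θ) (hθ1 : θ < 1)
    (hr0 : 0 ≤ r) (hr1 : r < 1) (hPF : IsPerronFrobenius m Pσ) (hgap : HasGap m θ Pσ D r)
    (hm : MeasurePreserving shift m m) {η : Measure (SigmaA N A)} [IsProbabilityMeasure η]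
    (hη : MeasurePreserving shift η η) (hηm : η ≪ m) {ψ : SigmaA N A → ℝ}
    (hψ : LipD (dTheta θ) ψ) (hψη : ψ =ᵐ[m] fun x ↦ (η.rnDeriv m x).toReal) : η = m := by
  have hint : Integrable ψ m := Measure.integrable_toReal_rnDeriv.congr hψη.symm
  have hset (E : Set (SigmaA N A)) : ∫ x in E, (ψ x - 1) ∂m = η.real E - m.real E := by
    rw [integral_sub hint.integrableOn (integrable_const _).integrableOn,
      integral_congr_ae (ae_restrict_of_ae hψη), Measure.setIntegral_toReal_rnDeriv hηm]
    simp
  have hmean : ∫ x, (ψ x - 1) ∂m = 0 := by simpa using hset univ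
  ext E hE
  have hconst n : ∫ x in shift^[n] ⁻¹' E, (ψ x - 1) ∂m = η.real E - m.real E := by
    rw [hset, (hη.iterate n).measureReal_preimage hE.nullMeasurableSet,
      (hm.iterate n).measureReal_preimage hE.nullMeasurableSet]
  have hlim := hgap.tendsto_setIntegral_preimage hθ0 hθ1 hr0 hr1 hPF (hψ.sub_const 1) hmean hE
  simp only [hconst, tendsto_const_nhds_iff, sub_eq_zero] at hlim
  simpa [measureReal_eq_measureReal_iff] using hlim

end SpectralGap

section Norms

variable {Z : Type*} [MeasurableSpace Z] {m : Measure (SigmaA N A)} {μ : Measure (SigmaA N A × Z)}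

theorem phiPair_zero_right_ae_eq (μ : Measure (SigmaA N A × Z)) :
    phiPair m μ 0 =ᵐ[m] fun γ ↦ (μ.fst.rnDeriv m γ).toReal := by
  filter_upwards [Measure.rnDeriv_zero m] with γ hγ
  simp [phiPair, hγ]

theorem thetaNormMu_of_phiPair_ae_eq_const [NeZero m] {θ c : ℝ} {μ ν : Measure (SigmaA N A × Z)}
    (h : phiPair m μ ν =ᵐ[m] fun _ ↦ c) : thetaNormMu m θ μ ν = ENNReal.ofReal |c| := by
  refine le_antisymm (iInf_le_of_le ⟨_, h.symm⟩ ?_) (le_iInf fun ψ ↦ ?_)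
  · simp [thetaNorm, supNormE, lipConst]
  · obtain ⟨x, hx : ψ.val x = c⟩ := (ψ.2.trans h).exists
    rw [← hx]
    exact le_add_right (le_iSup (fun y ↦ ENNReal.ofReal |ψ.val y|) x)

theorem phiPair_zero_right_ae_eq_one [SigmaFinite m] (hμ : μ.fst = m) :
    phiPair m μ 0 =ᵐ[m] fun _ ↦ 1 := by
  filter_upwards [phiPair_zero_right_ae_eq μ, Measure.rnDeriv_self m] with γ hγ hγ_one
  simp [hγ, hμ, hγ_one]

variable [MetricSpace Z]

theorem wDist_zero_right (ν : Measure Z) [IsFiniteMeasure ν] : wDist ν 0 = ν univ := by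
  refine le_antisymm (iSup_le fun g ↦ ?_) ?_
  · rw [integral_zero_measure, sub_zero, ← ofReal_measureReal]
    refine ENNReal.ofReal_le_ofReal ?_
    simpa using norm_integral_le_of_norm_le_const (f := g.val) (C := 1) (ae_of_all ν g.2.2)
  · refine le_iSup_of_le ⟨fun _ ↦ 1, LipschitzWith.const' 1, by simp⟩ ?_
    simp [abs_of_nonneg]

variable [BorelSpace Z] [CompactSpace Z] [Nonempty Z]

theorem infNormPair_zero_right [IsFiniteMeasure μ] :
    infNormPair m μ 0 = essSup (μ.fst.rnDeriv m) m := by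
  refine essSup_congr_ae ?_
  filter_upwards [Measure.rnDeriv_zero m, Measure.rnDeriv_lt_top μ.fst m] with γ hγ hγ_top
  have hfiber : fiberR m μ γ = μ.fst.rnDeriv m γ • μ.condKernel γ := dif_pos ‹_›
  have hfiber_zero : fiberR m (0 : Measure (SigmaA N A × Z)) γ = 0 := by
    simp [fiberR, hγ]
  have := (μ.condKernel γ).smul_finite hγ_top.ne
  rw [hfiber, hfiber_zero, wDist_zero_right]
  simp

variable [IsProbabilityMeasure m] [IsProbabilityMeasure μ]

theorem infNormPair_zero_right_eq_one (hμ : μ.fst = m) : infNormPair m μ 0 = 1 := by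
  rw [infNormPair_zero_right, hμ, essSup_congr_ae (Measure.rnDeriv_self m)]
  exact essSup_const _ (NeZero.ne m)

theorem sNormPair_zero_right_eq_two (θ : ℝ) (hμ : μ.fst = m) : sNormPair m θ μ 0 = 2 := by
  rw [sNormPair, infNormPair_zero_right_eq_one hμ,
    thetaNormMu_of_phiPair_ae_eq_const (phiPair_zero_right_ae_eq_one hμ), abs_one, ofReal_one,
    one_add_one_eq_two]

theorem memSPair_zero_right (θ : ℝ) (hμ : μ.fst = m) : MemSPair m θ μ 0 :=
  ⟨⟨hμ ▸ .rfl, by simp, inferInstance, inferInstance⟩,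
    infNormPair_zero_right_eq_one hμ ▸ one_lt_top, fun _ ↦ 1,
    (phiPair_zero_right_ae_eq_one hμ).symm, 0, fun _ _ ↦ by simp⟩

end Norms

section InvariantMarginal

variable {θ D r : ℝ} {m : Measure (SigmaA N A)} [IsProbabilityMeasure m]
  {Pσ : (SigmaA N A → ℝ) → SigmaA N A → ℝ}

theorem MemSPair.fst_eq_of_hasGap {Z : Type*} [MetricSpace Z] [CompactSpace Z] [Nonempty Z]
    [MeasurableSpace Z] [BorelSpace Z] {G : SigmaA N A × Z → Z} {μ : Measure (SigmaA N A × Z)}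
    [IsProbabilityMeasure μ] (hS : MemSPair m θ μ 0) (hμ : MeasurePreserving (skew G) μ μ)
    (hm : MeasurePreserving shift m m) (hθ0 : 0 < θ) (hθ1 : θ < 1) (hr0 : 0 ≤ r) (hr1 : r < 1)
    (hPF : IsPerronFrobenius m Pσ) (hgap : HasGap m θ Pσ D r) : μ.fst = m := by
  obtain ⟨⟨hac, -, -, -⟩, -, ψ, hψ, hψ_lip⟩ := hS
  have hfst : MeasurePreserving shift μ.fst μ.fst :=
    .of_semiconj (hfm := ⟨measurable_fst, rfl⟩) hμ semiconj_fst_skewProduct hm.measurable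
  exact hgap.eq_of_measurePreserving_shift hθ0 hθ1 hr0 hr1 hPF hm hfst hac hψ_lip
    (hψ.trans (phiPair_zero_right_ae_eq μ))

end InvariantMarginal

theorem unique_invariant_measure_in_Sinfty_general
    (N : ℕ) (A : Fin N → Fin N → Bool)
    (θ : ℝ) (hθ0 : 0 < θ) (hθ1 : θ < 1)
    (m : Measure (SigmaA N A)) [IsProbabilityMeasure m] (hminv : m.map shift = m)
    {K : Type*} [MetricSpace K] [CompactSpace K] [Nonempty K]
    [MeasurableSpace K] [BorelSpace K]
    (G : SigmaA N A × K → K) (hGm : Measurable (skew G))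
    (α : ℝ) (hα1 : α < 1) (hG1 : CondG1 G α)
    (Pσ : (SigmaA N A → ℝ) → SigmaA N A → ℝ) (hPF : IsPerronFrobenius m Pσ)
    (D r : ℝ) (hr0 : 0 < r) (hr1 : r < 1)
    (hgap : HasGap m θ Pσ D r) :
    ∃ μ₀ : Measure (SigmaA N A × K),
      (IsProbabilityMeasure μ₀ ∧ μ₀.map (skew G) = μ₀ ∧ MemSPair m θ μ₀ 0) ∧
      (∀ μ' : Measure (SigmaA N A × K),
        IsProbabilityMeasure μ' → μ'.map (skew G) = μ' → MemSPair m θ μ' 0 →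
          μ' = μ₀) ∧
      infNormPair m μ₀ 0 = 1 ∧ sNormPair m θ μ₀ 0 = 2 := by
  have hm : MeasurePreserving shift m m := ⟨continuous_shift.measurable, hminv⟩
  have hG : Measurable G := measurable_snd.comp hGm
  have hα : α.toNNReal < 1 := Real.toNNReal_lt_one.mpr hα1
  have hG_lip x : LipschitzWith α.toNNReal fun z ↦ G (x, z) := .of_dist_le_mul fun z₁ z₂ ↦
    (hG1 x z₁ z₂).trans (mul_le_mul_of_nonneg_right (Real.le_coe_toNNReal α) dist_nonneg)
  obtain ⟨μ₀, _, hμ₀, hfst⟩ := exists_measurePreserving_skewProduct hG hα hG_lip hm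
  refine ⟨μ₀, ⟨inferInstance, hμ₀.map_eq, memSPair_zero_right θ hfst⟩, fun μ' _ hμ'_inv hS ↦ ?_,
    infNormPair_zero_right_eq_one hfst, sNormPair_zero_right_eq_two θ hfst⟩
  have hμ' : MeasurePreserving (skew G) μ' μ' := ⟨hGm, hμ'_inv⟩
  have hfst' : μ'.fst = m := hS.fst_eq_of_hasGap hμ' hm hθ0 hθ1 hr0.le hr1 hPF hgap
  exact eq_of_measurePreserving_skewProduct hm.measurable hG hα hG_lip hμ' hμ₀
    (hfst'.trans hfst.symm)

/-- Under (G1) and the spectral gap of the Perron–Frobenius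
operator of the base shift, `F` admits exactly one invariant probability
measure `μ₀` in `S^∞`; moreover `‖μ₀‖_∞ = 1` and `‖μ₀‖_{S^∞} = 2`. -/
theorem unique_invariant_measure_in_Sinfty
    (N : ℕ) (A : Fin N → Fin N → Bool) (hA : Aperiodic A)
    (θ : ℝ) (hθ0 : 0 < θ) (hθ1 : θ < 1)
    (m : Measure (SigmaA N A)) [IsProbabilityMeasure m]
    (hmM : IsMarkov m) (hminv : m.map shift = m)
    {K : Type*} [MetricSpace K] [CompactSpace K] [Nonempty K]
    [MeasurableSpace K] [BorelSpace K]
    (hdiam : Metric.diam (Set.univ : Set K) = 1)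
    (G : SigmaA N A × K → K) (hGm : Measurable (skew G))
    (α : ℝ) (hα0 : 0 < α) (hα1 : α < 1) (hG1 : CondG1 G α)
    (Pσ : (SigmaA N A → ℝ) → SigmaA N A → ℝ) (hPF : IsPerronFrobenius m Pσ)
    (D r : ℝ) (hD : 0 < D) (hr0 : 0 < r) (hr1 : r < 1)
    (hgap : HasGap m θ Pσ D r) :
    ∃ μ₀ : Measure (SigmaA N A × K),
      (IsProbabilityMeasure μ₀ ∧ μ₀.map (skew G) = μ₀ ∧ MemSPair m θ μ₀ 0) ∧
      (∀ μ' : Measure (SigmaA N A × K),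
        IsProbabilityMeasure μ' → μ'.map (skew G) = μ' → MemSPair m θ μ' 0 →
          μ' = μ₀) ∧
      infNormPair m μ₀ 0 = 1 ∧ sNormPair m θ μ₀ 0 = 2 :=
  unique_invariant_measure_in_Sinfty_general N A θ hθ0 hθ1 m hminv G hGm α hα1 hG1 Pσ hPF D r
    hr0 hr1 hgap

end RDS
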